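/- Let p be a prime, k ≥ 1, and f, g ∈ R_{p^k} such that BB_{p^k}(f,g) is topological, and let M = R_{p^k} ⧸ Ideal.span {f, g}, viewed as a ZMod (p^k)-module. Then for every m ∈ M, one has (p : ZMod (p^k)) • m = 0 if and only if there exists m' ∈ M with m = (p : ZMod (p^k))^(k-1) • m'. (Equivalently, the annihilator of p in M equals p^{k-1}·M, i.e., Tor_1 over ZMod (p^k) of ZMod (p^k)/(p) with M vanishes.) -/

import Mathlib

/-- The Laurent polynomial ring `(ZMod N)[X^{±1}, Y^{±1}]`. -/
abbrev RR (N : ℕ) : Type := AddMonoidAlgebra (ZMod N) (ℤ × ℤ)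

/-- The code `BB_N(f,g)` is topological. -/
def IsTopological {N : ℕ} (f g : RR N) : Prop :=
  ∀ r s : RR N, r * f + s * g = 0 → ∃ h : RR N, r = h * g ∧ s = -(h * f)

/-! Multiplications by `p` and by `p ^ (k - 1)` are each other's kernels on `ZMod (p ^ k)`, hence
on every flat algebra `R` over it. If `p * m = a * f + b * g`, then multiplying by `p ^ (k - 1)`
gives a syzygy of `(f, g)`; it is a Koszul syzygy with a multiplier `h`, and `p * h` annihilates
`f` and `g`. An element annihilating `f` is divisible by every power of `g`, because all syzygies
are Koszul; Krull's intersection theorem therefore forces `p * h = 0`. So `h` is a multiple of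
`p ^ (k - 1)`, and correcting `(a, b)` by a Koszul syzygy makes both coefficients divisible by
`p`: say `p * m = p * y` with `y` in the ideal. Then `m - y` is a multiple of `p ^ (k - 1)`. -/

/-- An exact pair of zero divisors: each of `u` and `v` generates the annihilator of the other.
This is the relation between `p` and `p ^ (k - 1)` modulo `p ^ k`. Units are not excluded, so
`(0, 1)` is an exact pair. -/
structure IsExactPair {R : Type*} [CommRing R] (u v : R) : Prop where
  left_mul_eq_zero_iff (x : R) : u * x = 0 ↔ v ∣ x
  right_mul_eq_zero_iff (x : R) : v * x = 0 ↔ u ∣ x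

/-- Exactness of the Koszul complex `R → R × R → R` of `(f, g)` in the middle. For Laurent
polynomials this is `IsTopological`. -/
def IsKoszulExact {R : Type*} [CommRing R] (f g : R) : Prop :=
  ∀ r s : R, r * f + s * g = 0 → ∃ h : R, r = h * g ∧ s = -(h * f)

theorem isNoetherianRing_RR (N : ℕ) : IsNoetherianRing (RR N) :=
  have : IsNoetherianRing (ZMod N) :=
    isNoetherianRing_of_surjective ℤ _ (Int.castRingHom _) ZMod.intCast_surjective
  Algebra.FiniteType.isNoetherianRing (ZMod N) _

theorem dvd_natCast_zmod_of_mul_eq_zero {n a b : ℕ} (ha : a ≠ 0) (hab : a * b = n) {x : ZMod n}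
    (hx : (a : ZMod n) * x = 0) : (b : ZMod n) ∣ x := by
  obtain ⟨z, rfl⟩ := ZMod.intCast_surjective x
  have hdvd : (a : ℤ) * b ∣ a * z := by
    rw [← Nat.cast_mul, hab, ← ZMod.intCast_zmod_eq_zero_iff_dvd]
    exact_mod_cast hx
  obtain ⟨y, rfl⟩ := (mul_dvd_mul_iff_left (by exact_mod_cast ha)).1 hdvd
  exact ⟨y, by push_cast; rfl⟩

theorem dvd_algebraMap_of_smul_eq_zero {A R : Type*} [CommRing A] [CommRing R] [Algebra A R]
    [Module.Flat A R] {u v : A} (huv : ∀ c, u * c = 0 → v ∣ c) {x : R} (hx : u • x = 0) :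
    algebraMap A R v ∣ x := by
  -- The equational criterion writes `x` as a combination of elements of the annihilator of `u`.
  obtain ⟨n, a, y, hxy, ha⟩ := Module.Flat.isTrivialRelation_of_sum_smul_eq_zero
    (f := fun _ : Unit => u) (x := fun _ => x) (by simpa using hx)
  rw [show x = _ from hxy ()]
  refine Finset.dvd_sum fun j _ => ?_
  rw [Algebra.smul_def]
  exact (map_dvd _ (huv _ (by simpa using ha j))).mul_right _

namespace IsExactPair

section

variable {R : Type*} [CommRing R] {u v : R}

theorem of_dvd (huv : u * v = 0)
    (hv : ∀ x, u * x = 0 → v ∣ x) (hu : ∀ x, v * x = 0 → u ∣ x) : IsExactPair u v where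
  left_mul_eq_zero_iff x :=
    ⟨hv x, by rintro ⟨y, rfl⟩; rw [← mul_assoc, huv, zero_mul]⟩
  right_mul_eq_zero_iff x :=
    ⟨hu x, by rintro ⟨y, rfl⟩; rw [← mul_assoc, mul_comm v, huv, zero_mul]⟩

theorem symm (h : IsExactPair u v) : IsExactPair v u :=
  ⟨h.right_mul_eq_zero_iff, h.left_mul_eq_zero_iff⟩

theorem mul_eq_zero (h : IsExactPair u v) : u * v = 0 :=
  (h.left_mul_eq_zero_iff v).2 dvd_rfl

end

theorem natCast_zmod {n a b : ℕ} (hn : n ≠ 0) (hab : a * b = n) :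
    IsExactPair (a : ZMod n) (b : ZMod n) := by
  have ha : a ≠ 0 := left_ne_zero_of_mul (hab.trans_ne hn)
  have hb : b ≠ 0 := right_ne_zero_of_mul (hab.trans_ne hn)
  refine of_dvd ?_ (fun _ => dvd_natCast_zmod_of_mul_eq_zero ha hab)
    (fun _ => dvd_natCast_zmod_of_mul_eq_zero hb ((mul_comm b a).trans hab))
  rw [← Nat.cast_mul, hab, ZMod.natCast_self]

theorem natCast_zmod_pow {p k : ℕ} (hp : p ≠ 0) (hk : k ≠ 0) :
    IsExactPair (p : ZMod (p ^ k)) ((p : ZMod (p ^ k)) ^ (k - 1)) := by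
  simpa only [Nat.cast_pow] using natCast_zmod (pow_ne_zero k hp) (mul_pow_sub_one hk p)

theorem algebraMap {A R : Type*} [CommRing A] [CommRing R] [Algebra A R] [Module.Flat A R]
    {u v : A} (h : IsExactPair u v) : IsExactPair (algebraMap A R u) (algebraMap A R v) := by
  refine of_dvd ?_
    (fun x hx => dvd_algebraMap_of_smul_eq_zero (fun c => (h.left_mul_eq_zero_iff c).1) ?_)
    (fun x hx => dvd_algebraMap_of_smul_eq_zero (fun c => (h.right_mul_eq_zero_iff c).1) ?_)
  · rw [← map_mul, h.mul_eq_zero, map_zero]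
  · rwa [Algebra.smul_def]
  · rwa [Algebra.smul_def]

end IsExactPair

namespace IsKoszulExact

variable {R : Type*} [CommRing R] {f g : R}

theorem exists_eq_mul_pow (hfg : IsKoszulExact f g) {x : R} (hf : x * f = 0) (n : ℕ) :
    ∃ y, x = y * g ^ n ∧ y * f = 0 := by
  induction n with
  | zero => exact ⟨x, by simp, hf⟩
  | succ n ih =>
    obtain ⟨y, rfl, hyf⟩ := ih
    obtain ⟨z, rfl, hzf⟩ := hfg y 0 (by simpa using hyf)
    exact ⟨z, by ring, by simpa using hzf.symm⟩

theorem eq_zero_of_mul_eq_zero [IsNoetherianRing R] (hfg : IsKoszulExact f g) {x : R}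
    (hf : x * f = 0) (hg : x * g = 0) : x = 0 := by
  have hmem : x ∈ (⨅ n : ℕ, Ideal.span {g} ^ n • ⊤ : Submodule R R) := by
    refine (Submodule.mem_iInf _).2 fun n => ?_
    obtain ⟨y, hy, -⟩ := hfg.exists_eq_mul_pow hf n
    rw [smul_eq_mul, Ideal.mul_top, Ideal.span_singleton_pow, Ideal.mem_span_singleton']
    exact ⟨y, hy.symm⟩
  obtain ⟨⟨r, hr⟩, hrx⟩ := (Ideal.mem_iInf_smul_pow_eq_bot_iff _ x).1 hmem
  obtain ⟨c, rfl⟩ := Ideal.mem_span_singleton'.1 hr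
  calc
    x = c * g * x := hrx.symm
    _ = c * (x * g) := by ring
    _ = 0 := by rw [hg, mul_zero]

theorem exists_mem_span_pair_mul_eq [IsNoetherianRing R] (hfg : IsKoszulExact f g) {u v : R}
    (huv : IsExactPair u v) {x : R} (hx : u * x ∈ Ideal.span {f, g}) :
    ∃ y ∈ Ideal.span {f, g}, u * x = u * y := by
  obtain ⟨a, b, hab⟩ := Ideal.mem_span_pair.1 hx
  have hsyz : v * a * f + v * b * g = 0 := by
    linear_combination v * hab + x * huv.mul_eq_zero
  obtain ⟨h, hva, hvb⟩ := hfg _ _ hsyz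
  have huh : u * h = 0 := hfg.eq_zero_of_mul_eq_zero
    (by linear_combination u * hvb - b * huv.mul_eq_zero)
    (by linear_combination a * huv.mul_eq_zero - u * hva)
  obtain ⟨e, rfl⟩ := (huv.left_mul_eq_zero_iff h).1 huh
  obtain ⟨c, hc⟩ := (huv.right_mul_eq_zero_iff (a - e * g)).1 (by linear_combination hva)
  obtain ⟨d, hd⟩ := (huv.right_mul_eq_zero_iff (b + e * f)).1 (by linear_combination hvb)
  refine ⟨c * f + d * g, Ideal.mem_span_pair.2 ⟨c, d, rfl⟩, ?_⟩
  linear_combination f * hc + g * hd - hab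

theorem dvd_mk_of_mul_eq_zero [IsNoetherianRing R] (hfg : IsKoszulExact f g) {u v : R}
    (huv : IsExactPair u v) {m : R ⧸ Ideal.span {f, g}} (hm : Ideal.Quotient.mk _ u * m = 0) :
    Ideal.Quotient.mk _ v ∣ m := by
  obtain ⟨x, rfl⟩ := Ideal.Quotient.mk_surjective m
  rw [← map_mul, Ideal.Quotient.eq_zero_iff_mem] at hm
  obtain ⟨y, hy, huxy⟩ := hfg.exists_mem_span_pair_mul_eq huv hm
  have hdvd : v ∣ x - y := (huv.left_mul_eq_zero_iff _).1 (by rw [mul_sub, huxy, sub_self])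
  have hmk : Ideal.Quotient.mk (Ideal.span {f, g}) (x - y) = Ideal.Quotient.mk _ x := by
    rw [map_sub, Ideal.Quotient.eq_zero_iff_mem.2 hy, sub_zero]
  exact hmk ▸ map_dvd _ hdvd

theorem isExactPair_mk [IsNoetherianRing R] (hfg : IsKoszulExact f g) {u v : R}
    (huv : IsExactPair u v) :
    IsExactPair (Ideal.Quotient.mk (Ideal.span {f, g}) u) (Ideal.Quotient.mk _ v) :=
  .of_dvd (by rw [← map_mul, huv.mul_eq_zero, map_zero])
    (fun _ => hfg.dvd_mk_of_mul_eq_zero huv) (fun _ => hfg.dvd_mk_of_mul_eq_zero huv.symm)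

end IsKoszulExact

theorem stmt6_general {A R : Type*} [CommRing A] [CommRing R] [Algebra A R] [Module.Flat A R]
    [IsNoetherianRing R] {u v : A} (huv : IsExactPair u v) {f g : R} (hfg : IsKoszulExact f g)
    (m : R ⧸ Ideal.span {f, g}) :
    u • m = 0 ↔ ∃ m' : R ⧸ Ideal.span {f, g}, m = v • m' := by
  simp only [Algebra.smul_def]
  exact (hfg.isExactPair_mk huv.algebraMap).left_mul_eq_zero_iff m

theorem stmt6 (p k : ℕ) (hp : p.Prime) (hk : 1 ≤ k) (f g : RR (p ^ k))
    (htopo : IsTopological f g) :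
    ∀ m : RR (p ^ k) ⧸ Ideal.span {f, g},
      (p : ZMod (p ^ k)) • m = 0 ↔
        ∃ m' : RR (p ^ k) ⧸ Ideal.span {f, g},
          m = ((p : ZMod (p ^ k)) ^ (k - 1)) • m' :=
  have := isNoetherianRing_RR (p ^ k)
  stmt6_general (.natCast_zmod_pow hp.ne_zero (Nat.one_le_iff_ne_zero.1 hk)) htopo
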